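/- arXiv:1302.6330 — 2 statements merged into one kernel-verified Lean document; each statement's English description precedes it below -/
import Mathlib

section
/- For every contract 𝒞 and every reachable set of events X ⊆ E, there exists a configuration C of 𝒞 with X ⊆ C. -/
/-- A contract: events `E`, participants `A`, ownership map `pi`, a saturated
fulfillment relation `ok`, a saturated enabling relation `en` (`⊢`) and a
saturated circular enabling relation `cen` (`⊩`). -/
structure Contract (E A : Type) [Fintype E] [Fintype A] where
  pi : E → A
  ok : A → Set E → Prop
  ok_sat : ∀ (a : A) (X Y : Set E), ok a X → X ⊆ Y → ok a Y
  en : Set E → E → Prop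
  en_sat : ∀ (X Y : Set E) (e : E), en X e → X ⊆ Y → en Y e
  cen : Set E → E → Prop
  cen_sat : ∀ (X Y : Set E) (e : E), cen X e → X ⊆ Y → cen Y e

variable {E A : Type} [Fintype E] [Fintype A]

/-- `C` is a configuration iff there is a sequence `e₀,…,eₙ` whose elements are
exactly those of `C`, where each `eᵢ` is either `⊢`-enabled by its predecessors
or `⊩`-enabled by `C` itself. -/
def IsConfig (𝒞 : Contract E A) (C : Set E) : Prop :=
  ∃ l : List E, (∀ e, e ∈ l ↔ e ∈ C) ∧
    ∀ i : Fin l.length, 𝒞.en {e | e ∈ l.take i.1} (l.get i) ∨ 𝒞.cen C (l.get i)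

/-- An event is reachable iff it belongs to some configuration. -/
def Reachable (𝒞 : Contract E A) (e : E) : Prop :=
  ∃ C, IsConfig 𝒞 C ∧ e ∈ C

theorem IsConfig.union_aux (𝒞 : Contract E A) (C D : Set E)
    (hC : IsConfig 𝒞 C) (hD : IsConfig 𝒞 D) : IsConfig 𝒞 (C ∪ D) := by
  obtain ⟨l, hl, hl2⟩ := hC
  obtain ⟨m, hm, hm2⟩ := hD
  refine ⟨l ++ m, fun e => by simp [hl, hm], ?_⟩
  rintro ⟨i, hi⟩
  simp only [List.get_eq_getElem]
  by_cases h : i < l.length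
  · rw [List.getElem_append_left h]
    rcases hl2 ⟨i, h⟩ with h1 | h1
    · left
      refine 𝒞.en_sat _ _ _ h1 ?_
      intro e he
      simp only [Set.mem_setOf_eq, List.take_append, List.mem_append] at he ⊢
      exact Or.inl he
    · right
      exact 𝒞.cen_sat _ _ _ h1 Set.subset_union_left
  · have h' : l.length ≤ i := not_lt.mp h
    have h3 : i - l.length < m.length := by
      rw [List.length_append] at hi
      omega
    rw [List.getElem_append_right h']
    rcases hm2 ⟨i - l.length, h3⟩ with h1 | h1
    · left
      refine 𝒞.en_sat _ _ _ h1 ?_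
      intro e he
      simp only [Set.mem_setOf_eq, List.take_append, List.mem_append] at he ⊢
      exact Or.inr he
    · right
      exact 𝒞.cen_sat _ _ _ h1 Set.subset_union_right

/-- Every reachable set of events is contained in some configuration. -/
theorem reachable_subset_config (𝒞 : Contract E A) (X : Set E)
    (hX : ∀ e ∈ X, Reachable 𝒞 e) :
    ∃ C, IsConfig 𝒞 C ∧ X ⊆ C := by
  induction X, X.toFinite using Set.Finite.induction_on with
  | empty => exact ⟨∅, ⟨[], by simp, fun i => i.elim0⟩, Set.empty_subset _⟩
  | insert _ _ ih =>
    obtain ⟨C, hC, hs⟩ := ih (fun e he => hX e (Set.mem_insert_of_mem _ he))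
    obtain ⟨D, hD, hd⟩ := hX _ (Set.mem_insert _ _)
    exact ⟨C ∪ D, hC.union_aux 𝒞 C D hD,
      Set.insert_subset (Or.inr hd) (hs.trans Set.subset_union_left)⟩
end

section
/- For every contract 𝒞, every X ⊆ E and every event e: e is X-reachable (i.e., e belongs to some X-configuration of 𝒞) if and only if e ∈ ℛ(X), where ℛ is the inductively defined family of sets. -/
variable {E A : Type} [Fintype E] [Fintype A]

/-- `C` is an `X`-configuration: `X ⊆ C` and the events of `C` can be ordered so
that each one is in `X` (taken "on credit"), or `⊢`-enabled by its predecessors,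
or `⊩`-enabled by `C`. -/
def IsXConfig (𝒞 : Contract E A) (X C : Set E) : Prop :=
  X ⊆ C ∧ ∃ l : List E, (∀ e, e ∈ l ↔ e ∈ C) ∧
    ∀ i : Fin l.length,
      l.get i ∈ X ∨ 𝒞.en {e | e ∈ l.take i.1} (l.get i) ∨ 𝒞.cen C (l.get i)

/-- The inductively defined family `ℛ(X)`: `e ∈ ℛ(X)` if `e ∈ X`, or `D ⊢ e`
with `D ⊆ ℛ(X)`, or `D ⊩ e` with `D ⊆ ℛ(X ∪ {e})`. -/
inductive RSet {E A : Type} [Fintype E] [Fintype A] (𝒞 : Contract E A) :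
    Set E → E → Prop
  | base {X : Set E} {e : E} : e ∈ X → RSet 𝒞 X e
  | en {X D : Set E} {e : E} : 𝒞.en D e → (∀ d ∈ D, RSet 𝒞 X d) → RSet 𝒞 X e
  | cen {X D : Set E} {e : E} :
      𝒞.cen D e → (∀ d ∈ D, RSet 𝒞 (X ∪ {e}) d) → RSet 𝒞 X e

theorem RSet_cut (𝒞 : Contract E A) {Y : Set E} {d : E} (h : RSet 𝒞 Y d) :
    ∀ X : Set E, (∀ y ∈ Y, RSet 𝒞 X y) → RSet 𝒞 X d := by
  have mono : ∀ {Y : Set E} {d : E}, RSet 𝒞 Y d → ∀ X, Y ⊆ X → RSet 𝒞 X d := by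
    intro Y d h
    induction h with
    | base h => exact fun X hX => .base (hX h)
    | en h _ ih => exact fun X hX => .en h fun d hd => ih d hd X hX
    | cen h _ ih =>
      exact fun X hX => .cen h fun d hd => ih d hd _ (Set.union_subset_union_left _ hX)
  induction h with
  | base h => exact fun X hX => hX _ h
  | en h _ ih => exact fun X hX => .en h fun d hd => ih d hd X hX
  | cen h _ ih =>
    intro X hX
    refine .cen h fun d hd => ih d hd _ ?_
    rintro y (hy | hy)
    · exact mono (hX y hy) _ Set.subset_union_left
    · exact .base (Or.inr hy)

theorem RSet_of_config (𝒞 : Contract E A) (C : Set E) (n : ℕ) :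
    ∀ X : Set E, (C \ X).ncard = n → IsXConfig 𝒞 X C → ∀ e ∈ C, RSet 𝒞 X e := by
  induction n using Nat.strong_induction_on with
  | _ n IH =>
    rintro X hn ⟨hXC, l, hl, hv⟩
    have key : ∀ i (hi : i < l.length), RSet 𝒞 X (l.get ⟨i, hi⟩) := by
      intro i
      induction i using Nat.strong_induction_on with
      | _ i ih =>
        intro hi
        rcases hv ⟨i, hi⟩ with h | h | h
        · exact .base h
        · refine .en h ?_
          intro d hd
          obtain ⟨j, hj, rfl⟩ := List.mem_iff_getElem.1 hd
          have hj' : j < i ∧ j < l.length := by simpa using hj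
          simpa using ih j hj'.1 hj'.2
        · by_cases hX : l.get ⟨i, hi⟩ ∈ X
          · exact .base hX
          have hC : l.get ⟨i, hi⟩ ∈ C := (hl _).1 (List.get_mem _ _)
          refine .cen h ?_
          refine IH _ ?_ (X ∪ {l.get ⟨i, hi⟩}) rfl ⟨?_, l, hl, ?_⟩
          · rw [← hn]
            refine Set.ncard_lt_ncard ?_ (Set.toFinite _)
            refine ⟨fun x hx => ⟨hx.1, fun h => hx.2 (Or.inl h)⟩, fun hs => ?_⟩
            exact (hs ⟨hC, hX⟩).2 (Or.inr rfl)
          · exact Set.union_subset hXC (Set.singleton_subset_iff.2 hC)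
          · exact fun j => (hv j).imp_left Or.inl
    intro e he
    obtain ⟨j, hj, rfl⟩ := List.mem_iff_getElem.1 ((hl e).2 he)
    exact key j hj

/-- valid lists -/
inductive VList (𝒞 : Contract E A) (X C : Set E) : List E → Prop
  | nil : VList 𝒞 X C []
  | snoc {l : List E} {e : E} : VList 𝒞 X C l → e ∈ C →
      (e ∈ X ∨ 𝒞.en {x | x ∈ l} e ∨ 𝒞.cen C e) → VList 𝒞 X C (l ++ [e])

theorem VList.append {𝒞 : Contract E A} {X C : Set E} {l m : List E}
    (hl : VList 𝒞 X C l) (hm : VList 𝒞 X C m) : VList 𝒞 X C (l ++ m) := by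
  induction hm with
  | nil => simpa using hl
  | snoc _ he h ih =>
    rw [← List.append_assoc]
    refine .snoc ih he ?_
    rcases h with h | h | h
    · exact Or.inl h
    · exact Or.inr (Or.inl (𝒞.en_sat _ _ _ h fun x hx => List.mem_append_right _ hx))
    · exact Or.inr (Or.inr h)

theorem VList.mem {𝒞 : Contract E A} {X C : Set E} {l : List E}
    (hl : VList 𝒞 X C l) : ∀ e ∈ l, e ∈ C := by
  induction hl with
  | nil => simp
  | snoc _ he h ih =>
    intro x hx
    rcases List.mem_append.1 hx with hx | hx
    · exact ih x hx
    · rw [List.mem_singleton.1 hx]; exact he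

theorem VList.valid {𝒞 : Contract E A} {X C : Set E} {l : List E}
    (hl : VList 𝒞 X C l) : ∀ i (hi : i < l.length),
      l[i] ∈ X ∨ 𝒞.en {e | e ∈ l.take i} l[i] ∨ 𝒞.cen C l[i] := by
  induction hl with
  | nil => intro i hi; simp at hi
  | @snoc l e _ he h ih =>
    intro i hi
    by_cases hil : i < l.length
    · rw [List.getElem_append_left hil, List.take_append_of_le_length hil.le]
      exact ih i hil
    · have : i = l.length := by simp at hi; omega
      subst this
      simpa using h

theorem VList.gather {𝒞 : Contract E A} {X C : Set E} (S : Set E)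
    (h : ∀ d ∈ S, ∃ l, VList 𝒞 X C l ∧ d ∈ l) :
    ∃ l, VList 𝒞 X C l ∧ ∀ d ∈ S, d ∈ l := by
  induction S, S.toFinite using Set.Finite.induction_on with
  | empty => exact ⟨[], .nil, by simp⟩
  | insert _ _ ih =>
    obtain ⟨l, hl, h1⟩ := ih fun d hd => h d (Set.mem_insert_of_mem _ hd)
    obtain ⟨m, hm, h2⟩ := h _ (Set.mem_insert _ _)
    refine ⟨l ++ m, hl.append hm, ?_⟩
    rintro d (rfl | hd)
    · exact List.mem_append_right _ h2
    · exact List.mem_append_left _ (h1 d hd)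

theorem RSet_vlist (𝒞 : Contract E A) {X : Set E} {e : E} (h : RSet 𝒞 X e) :
    ∃ l, VList 𝒞 X {x | RSet 𝒞 X x} l ∧ e ∈ l := by
  induction h with
  | base h => exact ⟨[] ++ [_], .snoc .nil (.base h) (Or.inl h), by simp⟩
  | en h hD ih =>
    obtain ⟨l, hl, hd⟩ := VList.gather _ ih
    exact ⟨l ++ [_], .snoc hl (.en h hD) (Or.inr (Or.inl (𝒞.en_sat _ _ _ h hd))), by simp⟩
  | @cen X D e h hD _ =>
    have he : RSet 𝒞 X e := .cen h hD
    refine ⟨[] ++ [_], .snoc .nil he (Or.inr (Or.inr (𝒞.cen_sat _ _ _ h ?_))), by simp⟩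
    intro d hd
    refine RSet_cut 𝒞 (hD d hd) X ?_
    rintro y (hy | rfl)
    · exact .base hy
    · exact he

/-- An event is `X`-reachable iff it belongs to `ℛ(X)`. -/
theorem xreachable_iff_RSet (𝒞 : Contract E A) (X : Set E) (e : E) :
    (∃ C, IsXConfig 𝒞 X C ∧ e ∈ C) ↔ RSet 𝒞 X e := by
  constructor
  · rintro ⟨C, hC, he⟩
    exact RSet_of_config 𝒞 C _ X rfl hC e he
  · intro h
    obtain ⟨l, hl, hm⟩ := VList.gather {x | RSet 𝒞 X x} fun d hd => RSet_vlist 𝒞 hd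
    exact ⟨{x | RSet 𝒞 X x}, ⟨fun x hx => .base hx, l, fun x => ⟨hl.mem x, hm x⟩,
      fun i => hl.valid i.1 i.2⟩, h⟩
end
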